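/- Soundness of type abstraction: for every nonempty valid set C of static security types, C ⊆ γ_S(α_S(C)). -/

import Mathlib

/-!
Soundness of type abstraction reduces to soundness of label abstraction,
`C ⊆ γ_ℓ(α_ℓ(C))` (`subset_gammaL_alphaL`), by induction on the derivation of `AbsS C G`:
each component of an element of `C` lies in the corresponding component set, and hence in the
concretization of its abstraction.
-/

/-- Static security types: S ::= Bool_ℓ | S →_ℓ S. -/
inductive SType (L : Type) where
  | bool (l : L)
  | arrow (S1 : SType L) (l : L) (S2 : SType L)

variable {L : Type} [Lattice L] [BoundedOrder L]

/-- Static subtyping. -/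
inductive SSub : SType L → SType L → Prop where
  | bool {l l' : L} : l ≤ l' → SSub (.bool l) (.bool l')
  | arrow {S1 S1' S2 S2' : SType L} {l l' : L} :
      SSub S1' S1 → SSub S2 S2' → l ≤ l' →
      SSub (.arrow S1 l S2) (.arrow S1' l' S2')

/-- Label stamping on static types. -/
def SType.stamp : SType L → L → SType L
  | .bool l, l' => .bool (l ⊔ l')
  | .arrow S1 l S2, l' => .arrow S1 (l ⊔ l') S2

mutual
/-- Partial subtyping join ⋎. -/
def sjoin : SType L → SType L → Option (SType L)
  | .bool l, .bool l' => some (.bool (l ⊔ l'))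
  | .arrow S11 l S12, .arrow S21 l' S22 => do
      let m ← smeet S11 S21
      let j ← sjoin S12 S22
      pure (.arrow m (l ⊔ l') j)
  | _, _ => none
/-- Partial subtyping meet ⋏. -/
def smeet : SType L → SType L → Option (SType L)
  | .bool l, .bool l' => some (.bool (l ⊓ l'))
  | .arrow S11 l S12, .arrow S21 l' S22 => do
      let j ← sjoin S11 S21
      let m ← smeet S12 S22
      pure (.arrow j (l ⊓ l') m)
  | _, _ => none
end
/-- Gradual labels: a static label or the unknown label ?. -/
inductive GLabel (L : Type) where
  | lab (l : L)
  | unk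

/-- Label concretization γ_ℓ. -/
def gammaL {L : Type} : GLabel L → Set L
  | .lab l => {l}
  | .unk => Set.univ

/-- Label precision: ℓ̃₁ ⊑ ℓ̃₂ iff γ_ℓ(ℓ̃₁) ⊆ γ_ℓ(ℓ̃₂). -/
def lprec {L : Type} (a b : GLabel L) : Prop := gammaL a ⊆ gammaL b

-- Label abstraction α_ℓ: singleton sets map to their element, every other
-- nonempty set maps to ?. (It is undefined — arbitrary here — on the empty set.)
open Classical in
noncomputable def alphaL {L : Type} (C : Set L) : GLabel L :=
  if h : ∃ l, C = {l} then .lab h.choose else .unk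

/-- Consistent label ordering ℓ̃₁ ≾ ℓ̃₂. -/
def clle {L : Type} [Lattice L] [BoundedOrder L] (a b : GLabel L) : Prop :=
  ∃ l1 ∈ gammaL a, ∃ l2 ∈ gammaL b, l1 ≤ l2
/-- Gradual security types: S̃ ::= Bool_ℓ̃ | S̃ →_ℓ̃ S̃. -/
inductive GType (L : Type) where
  | bool (l : GLabel L)
  | arrow (S1 : GType L) (l : GLabel L) (S2 : GType L)

/-- Type concretization γ_S. -/
def gammaS {L : Type} : GType L → Set (SType L)
  | .bool g => {T | ∃ l ∈ gammaL g, T = .bool l}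
  | .arrow G1 g G2 =>
      {T | ∃ T1 ∈ gammaS G1, ∃ T2 ∈ gammaS G2, ∃ l ∈ gammaL g, T = .arrow T1 l T2}

/-- Type precision: S̃₁ ⊑ S̃₂ iff γ_S(S̃₁) ⊆ γ_S(S̃₂). -/
def gtprec {L : Type} (a b : GType L) : Prop := gammaS a ⊆ gammaS b

variable {L : Type} [Lattice L] [BoundedOrder L]

/-- Consistent subtyping S̃₁ ≲ S̃₂. -/
def ConsSub (a b : GType L) : Prop :=
  ∃ T1 ∈ gammaS a, ∃ T2 ∈ gammaS b, SSub T1 T2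

/-- Gradual label join ⊔̃, as the abstraction of the lifted join. -/
noncomputable def gljoin (a b : GLabel L) : GLabel L :=
  alphaL {l | ∃ l1 ∈ gammaL a, ∃ l2 ∈ gammaL b, l = l1 ⊔ l2}

/-- Gradual label meet ⊓̃, as the abstraction of the lifted meet. -/
noncomputable def glmeet (a b : GLabel L) : GLabel L :=
  alphaL {l | ∃ l1 ∈ gammaL a, ∃ l2 ∈ gammaL b, l = l1 ⊓ l2}

/-- Gradual label stamping on gradual types. -/
noncomputable def GType.stamp : GType L → GLabel L → GType L
  | .bool g, g' => .bool (gljoin g g')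
  | .arrow S1 g S2, g' => .arrow S1 (gljoin g g') S2

mutual
/-- Gradual (partial) subtyping join ⋎̃. -/
noncomputable def ggsjoin : GType L → GType L → Option (GType L)
  | .bool a, .bool b => some (.bool (gljoin a b))
  | .arrow S11 a S12, .arrow S21 b S22 => do
      let m ← ggsmeet S11 S21
      let j ← ggsjoin S12 S22
      pure (.arrow m (gljoin a b) j)
  | _, _ => none
/-- Gradual (partial) subtyping meet ⋏̃. -/
noncomputable def ggsmeet : GType L → GType L → Option (GType L)
  | .bool a, .bool b => some (.bool (glmeet a b))
  | .arrow S11 a S12, .arrow S21 b S22 => do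
      let j ← ggsjoin S11 S21
      let m ← ggsmeet S12 S22
      pure (.arrow j (glmeet a b) m)
  | _, _ => none
end
/-- Valid sets of static security types: all elements are Booleans, or all
elements are function types whose domain set and codomain set are valid. -/
inductive ValidSet {L : Type} : Set (SType L) → Prop where
  | bool {C : Set (SType L)} (h : ∀ S ∈ C, ∃ l, S = SType.bool l) : ValidSet C
  | arrow {C : Set (SType L)}
      (h : ∀ S ∈ C, ∃ S1 l S2, S = SType.arrow S1 l S2)
      (h1 : ValidSet {S1 | ∃ l S2, SType.arrow S1 l S2 ∈ C})
      (h2 : ValidSet {S2 | ∃ S1 l, SType.arrow S1 l S2 ∈ C}) : ValidSet C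

/-- Type abstraction α_S, as a (functional) relation: a set all of whose
elements are Booleans abstracts to Bool labeled with the abstraction of its
label set; a set of function types abstracts to the arrow of the abstractions
of its domain set, label set and codomain set. -/
inductive AbsS {L : Type} : Set (SType L) → GType L → Prop where
  | bool {C : Set (SType L)} (h : ∀ S ∈ C, ∃ l, S = SType.bool l) :
      AbsS C (GType.bool (alphaL {l | SType.bool l ∈ C}))
  | arrow {C : Set (SType L)} {G1 G2 : GType L}
      (h : ∀ S ∈ C, ∃ S1 l S2, S = SType.arrow S1 l S2)
      (h1 : AbsS {S1 | ∃ l S2, SType.arrow S1 l S2 ∈ C} G1)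
      (h2 : AbsS {S2 | ∃ S1 l, SType.arrow S1 l S2 ∈ C} G2) :
      AbsS C (GType.arrow G1 (alphaL {l | ∃ S1 S2, SType.arrow S1 l S2 ∈ C}) G2)
theorem subset_gammaL_alphaL {L : Type} (C : Set L) : C ⊆ gammaL (alphaL C) := by
  intro l hl
  unfold alphaL
  split_ifs with h
  · have hC := h.choose_spec
    rw [hC] at hl
    exact hl
  · exact Set.mem_univ l

/-- soundness of type abstraction. -/
theorem alphaS_sound {L : Type} [Lattice L] [BoundedOrder L]
    (C : Set (SType L)) (hne : C.Nonempty) (hv : ValidSet C)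
    (G : GType L) (hG : AbsS C G) : C ⊆ gammaS G := by
  clear hne hv
  induction hG with
  | bool h =>
    intro S hS
    obtain ⟨l, rfl⟩ := h S hS
    exact ⟨l, subset_gammaL_alphaL _ hS, rfl⟩
  | arrow h _ _ ih1 ih2 =>
    intro S hS
    obtain ⟨S1, l, S2, rfl⟩ := h S hS
    exact ⟨S1, ih1 ⟨l, S2, hS⟩, S2, ih2 ⟨S1, l, hS⟩, l,
      subset_gammaL_alphaL _ ⟨S1, S2, hS⟩, rfl⟩
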